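/- For the GFPGM iterates, for every N ≥ 1, min_{0 ≤ i ≤ N} ‖∇̃F(x_i)‖ ≤ min( min_{0 ≤ i ≤ N−1} ‖∇̃F(y_i)‖, ‖∇̃F(x_N)‖ ) ≤ L R / √( Σ_{k=0}^{N−1} (T_k − t_k²) + T_{N−1} ). -/

import Mathlib

open scoped RealInnerProductSpace

/-!
Write `F = f + φ`, `δ i = F (x i) - F xs` and `g i = y i - x (i + 1)`.

The first inequality holds because `p` is nonexpansive (`prox_grad_nonexpansive`): it is the
proximal map of `φ / L` applied after the gradient step `u ↦ u - f' u / L`, which is nonexpansive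
by cocoercivity of `f'`. Since `x (i + 1) = p (y i)`, it follows that
`‖x (i + 1) - p (x (i + 1))‖ ≤ ‖y i - p (y i)‖`.

For the second, put `z i = (T i • y i - (T i - t i) • x i) / t i`. The recursion for `y` says exactly
that `z (i + 1) = z i - t i • g i`. Adding the basic inequality of a proximal gradient step
(`prox_grad_inequality`) at the comparison points `x i` and `xs` with weights `T i - t i` and `t i`
shows that the potential
`(T n - t n) * δ n + L / 2 * ∑ k < n, (T k - t k ^ 2) * ‖g k‖ ^ 2 + L / 2 * ‖z n - xs‖ ^ 2`
is nonincreasing (`gfpgm_potential`). At `n = N` one has `T N - t N = T (N - 1)`, and a further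
step from `x N` gives `δ N ≥ L / 2 * ‖x N - p (x N)‖ ^ 2`. All the squared norms in the potential are
then bounded below by the square of the minimum divided by `L ^ 2`.
-/

section
variable {E : Type*} [NormedAddCommGroup E] [InnerProductSpace ℝ E]

lemma hasDerivAt_comp_line {f : E → ℝ} {f' : E → E}
    (hgrad : ∀ z : E, HasFDerivAt f (innerSL ℝ (f' z)) z) (u d : E) (s : ℝ) :
    HasDerivAt (fun r : ℝ => f (u + r • d)) ⟪f' (u + s • d), d⟫ s := by
  have h1 : HasDerivAt (fun r : ℝ => u + r • d) d s := by
    simpa using ((hasDerivAt_id s).smul_const d).const_add u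
  exact (hgrad (u + s • d)).comp_hasDerivAt s h1

lemma gradient_inequality {f : E → ℝ} {f' : E → E} (hf : ConvexOn ℝ Set.univ f)
    (hgrad : ∀ z : E, HasFDerivAt f (innerSL ℝ (f' z)) z) (u v : E) :
    f u + ⟪f' u, v - u⟫ ≤ f v := by
  have hc : ConvexOn ℝ Set.univ (fun r : ℝ => f (u + r • (v - u))) := by
    have := hf.comp_affineMap (AffineMap.lineMap u v : ℝ →ᵃ[ℝ] E)
    simpa [Function.comp_def, AffineMap.lineMap_apply, add_comm] using this
  have hd := hasDerivAt_comp_line hgrad u (v - u) 0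
  have h := hc.le_slope_of_hasDerivAt (Set.mem_univ 0) (Set.mem_univ 1) one_pos hd
  simp [slope_def_field] at h
  linarith

/-- The quadratic upper bound for a function with `L`-Lipschitz gradient: along the segment from `u`
to `v`, the difference of the two sides has a derivative of constant sign. -/
lemma descent_lemma {L : ℝ} {f : E → ℝ} {f' : E → E}
    (hgrad : ∀ z : E, HasFDerivAt f (innerSL ℝ (f' z)) z)
    (hLip : ∀ u v : E, ‖f' u - f' v‖ ≤ L * ‖u - v‖) (u v : E) :
    f v ≤ f u + ⟪f' u, v - u⟫ + L / 2 * ‖v - u‖ ^ 2 := by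
  set d := v - u with hd
  have hder (s : ℝ) : HasDerivAt
      (fun r : ℝ => f (u + r • d) - r * ⟪f' u, d⟫ - L / 2 * ‖d‖ ^ 2 * r ^ 2)
      (⟪f' (u + s • d), d⟫ - ⟪f' u, d⟫ - L * ‖d‖ ^ 2 * s) s := by
    have h := ((hasDerivAt_comp_line hgrad u d s).sub
      ((hasDerivAt_id s).mul_const ⟪f' u, d⟫)).sub
      (((hasDerivAt_id s).pow 2).const_mul (L / 2 * ‖d‖ ^ 2))
    refine h.congr_deriv ?_
    simp only [id, Nat.cast_ofNat]
    ring
  have hanti := antitoneOn_of_deriv_nonpos (convex_Icc (0 : ℝ) 1)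
    (fun s _ => (hder s).continuousAt.continuousWithinAt)
    (fun s _ => (hder s).differentiableAt.differentiableWithinAt)
    (fun s hs => by
      rw [interior_Icc] at hs
      rw [(hder s).deriv, ← inner_sub_left]
      have h1 := real_inner_le_norm (f' (u + s • d) - f' u) d
      have h2 := hLip (u + s • d) u
      rw [add_sub_cancel_left, norm_smul, Real.norm_of_nonneg hs.1.le] at h2
      nlinarith [mul_le_mul_of_nonneg_right h2 (norm_nonneg d)])
  have h := hanti (Set.left_mem_Icc.2 zero_le_one) (Set.right_mem_Icc.2 zero_le_one) zero_le_one
  simp [hd] at h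
  linarith

/-- Cocoercivity of the gradient of a smooth convex function (Baillon–Haddad). -/
lemma cocoercive {L : ℝ} (hL : 0 < L) {f : E → ℝ} {f' : E → E}
    (hf : ConvexOn ℝ Set.univ f)
    (hgrad : ∀ z : E, HasFDerivAt f (innerSL ℝ (f' z)) z)
    (hLip : ∀ u v : E, ‖f' u - f' v‖ ≤ L * ‖u - v‖) (u v : E) :
    ‖f' u - f' v‖ ^ 2 ≤ L * ⟪f' u - f' v, u - v⟫ := by
  have key (a b : E) : ‖f' a - f' b‖ ^ 2 ≤ 2 * L * (f b - f a - ⟪f' a, b - a⟫) := by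
    -- The chosen point minimizes the quadratic upper bound at `b` minus the affine minorant at `a`.
    have h1 := gradient_inequality hf hgrad a (b + L⁻¹ • (f' a - f' b))
    have h2 := descent_lemma hgrad hLip b (b + L⁻¹ • (f' a - f' b))
    rw [add_sub_cancel_left, norm_smul, inner_smul_right, mul_pow, Real.norm_of_nonneg
      (inv_pos.2 hL).le] at h2
    rw [add_sub_right_comm, inner_add_right, inner_smul_right] at h1
    have h3 : ⟪f' a, f' a - f' b⟫ - ⟪f' b, f' a - f' b⟫ = ‖f' a - f' b‖ ^ 2 := by
      rw [← inner_sub_left, real_inner_self_eq_norm_sq]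
    have h4 : L⁻¹ * ⟪f' a, f' a - f' b⟫ - L⁻¹ * ⟪f' b, f' a - f' b⟫
        = L⁻¹ * ‖f' a - f' b‖ ^ 2 := by rw [← h3]; ring
    have h5 : L / 2 * (L⁻¹ ^ 2 * ‖f' a - f' b‖ ^ 2) = L⁻¹ * ‖f' a - f' b‖ ^ 2 / 2 := by
      field_simp
    have h6 : L⁻¹ * ‖f' a - f' b‖ ^ 2 ≤ 2 * (f b - f a - ⟪f' a, b - a⟫) := by linarith
    rw [inv_mul_le_iff₀ hL] at h6
    linarith
  have h1 := key u v
  have h2 := key v u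
  rw [norm_sub_rev] at h2
  have h3 : ⟪f' u - f' v, u - v⟫ = - ⟪f' u, v - u⟫ - ⟪f' v, u - v⟫ := by
    rw [← inner_neg_right, neg_sub, inner_sub_left]
  rw [h3]
  nlinarith

/-- Optimality condition of the proximal gradient step: `-(f' y + L • (p y - y))` is a subgradient
of `φ` at `p y`. -/
lemma prox_subgradient {L : ℝ} {f φ : E → ℝ} {f' p : E → E}
    (hφ : ConvexOn ℝ Set.univ φ)
    (hp : ∀ y : E, IsMinOn
      (fun z => f y + ⟪f' y, z - y⟫ + L / 2 * ‖z - y‖ ^ 2 + φ z) Set.univ (p y)) (y z : E) :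
    φ (p y) ≤ φ z + ⟪f' y + L • (p y - y), z - p y⟫ := by
  -- Compare `p y` with `p y + s • (z - p y)`, use convexity of `φ`, divide by `s`, and let `s → 0`.
  have hs (s : ℝ) (hs0 : 0 < s) (hs1 : s ≤ 1) :
      0 ≤ φ z + ⟪f' y + L • (p y - y), z - p y⟫ - φ (p y) + s * (L / 2 * ‖z - p y‖ ^ 2) := by
    have h1 := isMinOn_iff.1 (hp y) (p y + s • (z - p y)) (Set.mem_univ _)
    have h2 := hφ.2 (Set.mem_univ (p y)) (Set.mem_univ z) (sub_nonneg.2 hs1) hs0.le (by ring)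
    have e1 : (1 - s) • p y + s • z = p y + s • (z - p y) := by module
    rw [e1, smul_eq_mul, smul_eq_mul] at h2
    have e2 : p y + s • (z - p y) - y = (p y - y) + s • (z - p y) := by abel
    simp only [e2] at h1
    rw [norm_add_sq_real, inner_add_right, inner_smul_right, inner_smul_right, norm_smul,
      Real.norm_of_nonneg hs0.le] at h1
    rw [inner_add_left, real_inner_smul_left]
    refine nonneg_of_mul_nonneg_right (a := s) ?_ hs0
    nlinarith
  have hlim : Filter.Tendsto (fun s : ℝ => φ z + ⟪f' y + L • (p y - y), z - p y⟫ - φ (p y)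
      + s * (L / 2 * ‖z - p y‖ ^ 2)) (nhdsWithin 0 (Set.Ioi 0))
      (nhds (φ z + ⟪f' y + L • (p y - y), z - p y⟫ - φ (p y))) := by
    refine Filter.Tendsto.mono_left ?_ nhdsWithin_le_nhds
    have : Continuous (fun s : ℝ => φ z + ⟪f' y + L • (p y - y), z - p y⟫ - φ (p y)
      + s * (L / 2 * ‖z - p y‖ ^ 2)) := by fun_prop
    simpa using this.tendsto 0
  have h := ge_of_tendsto hlim (by
    filter_upwards [Ioc_mem_nhdsGT (one_pos : (0 : ℝ) < 1)] with s h
    exact hs s h.1 h.2)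
  linarith

lemma prox_grad_nonexpansive {L : ℝ} (hL : 0 < L) {f φ : E → ℝ} {f' p : E → E}
    (hf : ConvexOn ℝ Set.univ f)
    (hgrad : ∀ z : E, HasFDerivAt f (innerSL ℝ (f' z)) z)
    (hLip : ∀ u v : E, ‖f' u - f' v‖ ≤ L * ‖u - v‖)
    (hφ : ConvexOn ℝ Set.univ φ)
    (hp : ∀ y : E, IsMinOn
      (fun z => f y + ⟪f' y, z - y⟫ + L / 2 * ‖z - y‖ ^ 2 + φ z) Set.univ (p y)) (u v : E) :
    ‖p u - p v‖ ≤ ‖u - v‖ := by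
  have h1 := prox_subgradient hφ hp u (p v)
  have h2 := prox_subgradient hφ hp v (p u)
  have hco := cocoercive hL hf hgrad hLip u v
  -- Monotonicity of the subdifferential of `φ`.
  have hmono : L * ‖p u - p v‖ ^ 2 ≤ ⟪L • (u - v) - (f' u - f' v), p u - p v⟫ := by
    have e : ⟪f' u + L • (p u - u), p v - p u⟫ + ⟪f' v + L • (p v - v), p u - p v⟫
        = ⟪L • (u - v) - (f' u - f' v), p u - p v⟫ - L * ‖p u - p v‖ ^ 2 := by
      rw [← neg_sub (p u) (p v), inner_neg_right, ← real_inner_self_eq_norm_sq,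
        ← real_inner_smul_left, neg_add_eq_sub, ← inner_sub_left, ← inner_sub_left]
      congr 1
      module
    linarith
  -- The gradient step `u ↦ u - f' u / L` is nonexpansive.
  have hfwd : ‖L • (u - v) - (f' u - f' v)‖ ≤ L * ‖u - v‖ := by
    refine le_of_sq_le_sq ?_ (by positivity)
    rw [norm_sub_sq_real, norm_smul, Real.norm_of_nonneg hL.le, real_inner_smul_left,
      real_inner_comm]
    nlinarith
  have hcs := (hmono.trans (real_inner_le_norm _ _)).trans
    (mul_le_mul_of_nonneg_right hfwd (norm_nonneg _))
  by_contra! hlt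
  have hpos : 0 < ‖p u - p v‖ := (norm_nonneg _).trans_lt hlt
  nlinarith [mul_pos hL (mul_pos hpos (sub_pos.2 hlt))]

/-- The basic inequality of a proximal gradient step from `y`, with an arbitrary comparison
point `z`. -/
lemma prox_grad_inequality {L : ℝ} {f φ : E → ℝ} {f' p : E → E}
    (hf : ConvexOn ℝ Set.univ f)
    (hgrad : ∀ z : E, HasFDerivAt f (innerSL ℝ (f' z)) z)
    (hLip : ∀ u v : E, ‖f' u - f' v‖ ≤ L * ‖u - v‖)
    (hφ : ConvexOn ℝ Set.univ φ)
    (hp : ∀ y : E, IsMinOn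
      (fun z => f y + ⟪f' y, z - y⟫ + L / 2 * ‖z - y‖ ^ 2 + φ z) Set.univ (p y)) (y z : E) :
    f (p y) + φ (p y) + L / 2 * ‖y - p y‖ ^ 2 + L * ⟪z - y, y - p y⟫ ≤ f z + φ z := by
  have h1 := prox_subgradient hφ hp y z
  have h2 := descent_lemma hgrad hLip y (p y)
  have h3 := gradient_inequality hf hgrad y z
  have e1 : z - p y = (z - y) + (y - p y) := by abel
  have e2 : p y - y = -(y - p y) := by abel
  rw [e1, inner_add_left, inner_add_right, real_inner_smul_left, inner_add_right, e2,
    inner_neg_left, inner_neg_left, real_inner_self_eq_norm_sq,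
    real_inner_comm (z - y) (y - p y)] at h1
  rw [e2, inner_neg_right, norm_neg] at h2
  linarith

/-- The potential estimate for the iterates, with the nonnegative term `L / 2 * ‖z n - xs‖ ^ 2`
dropped. For `n ≥ 1` the factor `T n - t n` is `T (n - 1)`, and for `n = 0` it is `0`. -/
lemma gfpgm_potential {L : ℝ} (hL : 0 < L) {f φ : E → ℝ} {f' p : E → E} {xs : E}
    (hf : ConvexOn ℝ Set.univ f)
    (hgrad : ∀ z : E, HasFDerivAt f (innerSL ℝ (f' z)) z)
    (hLip : ∀ u v : E, ‖f' u - f' v‖ ≤ L * ‖u - v‖)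
    (hφ : ConvexOn ℝ Set.univ φ)
    (hp : ∀ y : E, IsMinOn
      (fun z => f y + ⟪f' y, z - y⟫ + L / 2 * ‖z - y‖ ^ 2 + φ z) Set.univ (p y))
    {t T : ℕ → ℝ} (ht0 : t 0 = 1) (htpos : ∀ i, 0 < t i)
    (hT : ∀ i, T i = ∑ l ∈ Finset.range (i + 1), t l)
    (htT : ∀ i, t i ^ 2 ≤ T i)
    {x y : ℕ → E}
    (hy0 : y 0 = x 0)
    (hx : ∀ i, x (i + 1) = p (y i))
    (hy : ∀ i, y (i + 1) = x (i + 1)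
        + ((T i - t i) * t (i + 1) / (t i * T (i + 1))) • (x (i + 1) - x i)
        + ((t i ^ 2 - T i) * t (i + 1) / (t i * T (i + 1))) • (x (i + 1) - y i))
    (n : ℕ) :
    (T n - t n) * (f (x n) + φ (x n) - (f xs + φ xs))
      + L / 2 * ∑ k ∈ Finset.range n, (T k - t k ^ 2) * ‖y k - x (k + 1)‖ ^ 2
      ≤ L / 2 * ‖x 0 - xs‖ ^ 2 := by
  have hTsucc (i : ℕ) : T (i + 1) = T i + t (i + 1) := by
    rw [hT, hT, Finset.sum_range_succ _ (i + 1)]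
  have hTpos (i : ℕ) : 0 < T i := (pow_pos (htpos i) 2).trans_le (htT i)
  have hT0 : T 0 = 1 := by simp [hT, ht0]
  have hTt (i : ℕ) : 0 ≤ T i - t i := by
    cases i with
    | zero => simp [hT0, ht0]
    | succ i => rw [hTsucc]; simpa using (hTpos i).le
  -- The auxiliary sequence, determined by `T i • y i = (T i - t i) • x i + t i • z i`.
  let z : ℕ → E := fun i => (T i / t i) • y i - ((T i - t i) / t i) • x i
  have hz (i : ℕ) : z i = (T i / t i) • y i - ((T i - t i) / t i) • x i := rfl
  have hz0 : z 0 = x 0 := by simp [hz, hT0, ht0, hy0]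
  have hzsucc (i : ℕ) : z (i + 1) = z i - t i • (y i - x (i + 1)) := by
    have h1 := (htpos i).ne'
    have h2 := (htpos (i + 1)).ne'
    have h3 := (hTpos (i + 1)).ne'
    have e : T (i + 1) - t (i + 1) = T i := by rw [hTsucc]; ring
    have e' : T (i + 1) / t (i + 1) = T i / t (i + 1) + 1 := by rw [hTsucc]; field_simp
    have c1 : T (i + 1) / t (i + 1) * ((T i - t i) * t (i + 1) / (t i * T (i + 1)))
        = (T i - t i) / t i := by field_simp
    have c2 : T (i + 1) / t (i + 1) * ((t i ^ 2 - T i) * t (i + 1) / (t i * T (i + 1)))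
        = t i - T i / t i := by field_simp
    have c3 : (T i - t i) / t i = T i / t i - 1 := by field_simp
    rw [hz, hz, hy, smul_add, smul_add, smul_smul, smul_smul, c1, c2, e, e', c3]
    module
  suffices h : (T n - t n) * (f (x n) + φ (x n) - (f xs + φ xs))
      + L / 2 * ∑ k ∈ Finset.range n, (T k - t k ^ 2) * ‖y k - x (k + 1)‖ ^ 2
      + L / 2 * ‖z n - xs‖ ^ 2 ≤ L / 2 * ‖x 0 - xs‖ ^ 2 by
    have : 0 ≤ L / 2 * ‖z n - xs‖ ^ 2 := by positivity
    linarith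
  induction n with
  | zero => simp [hT0, ht0, hz0]
  | succ n ih =>
    have hA := mul_le_mul_of_nonneg_left
      (prox_grad_inequality hf hgrad hLip hφ hp (y n) (x n)) (hTt n)
    have hB := mul_le_mul_of_nonneg_left
      (prox_grad_inequality hf hgrad hLip hφ hp (y n) xs) (htpos n).le
    rw [← hx n] at hA hB
    have hnorm : ‖z (n + 1) - xs‖ ^ 2 = ‖z n - xs‖ ^ 2
        - 2 * (t n * ⟪z n - xs, y n - x (n + 1)⟫) + t n ^ 2 * ‖y n - x (n + 1)‖ ^ 2 := by
      rw [hzsucc, sub_right_comm, norm_sub_sq_real, inner_smul_right, norm_smul,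
        Real.norm_of_nonneg (htpos n).le]
      ring
    have hinner : (T n - t n) * ⟪x n - y n, y n - x (n + 1)⟫
        + t n * ⟪xs - y n, y n - x (n + 1)⟫ = - (t n * ⟪z n - xs, y n - x (n + 1)⟫) := by
      simp only [← real_inner_smul_left, ← inner_add_left, ← inner_neg_left]
      congr 1
      have h1 := (htpos n).ne'
      have c1 : t n * (T n / t n) = T n := by field_simp
      have c2 : t n * ((T n - t n) / t n) = T n - t n := by field_simp
      rw [hz, smul_sub (t n) (_ - _) xs, smul_sub (t n) (_ • y n), smul_smul, smul_smul, c1, c2]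
      module
    have hinnerL := congrArg (L * ·) hinner
    have e : T (n + 1) - t (n + 1) = T n := by rw [hTsucc]; ring
    rw [Finset.sum_range_succ, hnorm, e]
    linarith

end

/-- for the GFPGM iterates, for every N ≥ 1,
min_{0≤i≤N} ‖∇̃F(x_i)‖ ≤ min( min_{0≤i≤N−1} ‖∇̃F(y_i)‖, ‖∇̃F(x_N)‖ )
≤ LR/√( Σ_{k=0}^{N−1}(T_k − t_k²) + T_{N−1} ). -/
theorem gfpgm_cgm_bound
    {E : Type*} [NormedAddCommGroup E] [InnerProductSpace ℝ E]
    (L : ℝ) (hL : 0 < L)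
    (f : E → ℝ) (f' : E → E) (φ : E → ℝ)
    (hf : ConvexOn ℝ Set.univ f)
    (hgrad : ∀ z : E, HasFDerivAt f (innerSL ℝ (f' z)) z)
    (hLip : ∀ u v : E, ‖f' u - f' v‖ ≤ L * ‖u - v‖)
    (hφ : ConvexOn ℝ Set.univ φ)
    (p : E → E)
    (hp : ∀ y : E, IsMinOn
      (fun z => f y + ⟪f' y, z - y⟫ + L / 2 * ‖z - y‖ ^ 2 + φ z) Set.univ (p y))
    (xs : E) (hxs : IsMinOn (fun z => f z + φ z) Set.univ xs)
    (R : ℝ) (hR0 : 0 ≤ R)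
    (t T : ℕ → ℝ) (ht0 : t 0 = 1) (htpos : ∀ i, 0 < t i)
    (hT : ∀ i, T i = ∑ l ∈ Finset.range (i + 1), t l)
    (htT : ∀ i, t i ^ 2 ≤ T i)
    (x y : ℕ → E)
    (hy0 : y 0 = x 0)
    (hx : ∀ i, x (i + 1) = p (y i))
    (hy : ∀ i, y (i + 1) = x (i + 1)
        + ((T i - t i) * t (i + 1) / (t i * T (i + 1))) • (x (i + 1) - x i)
        + ((t i ^ 2 - T i) * t (i + 1) / (t i * T (i + 1))) • (x (i + 1) - y i))
    (hR : ‖x 0 - xs‖ ≤ R)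
    (N : ℕ) (hN : 1 ≤ N) :
    (Finset.range (N + 1)).inf' (Finset.nonempty_range_iff.mpr (Nat.succ_ne_zero N))
        (fun i => L * ‖x i - p (x i)‖)
      ≤ min ((Finset.range N).inf' (Finset.nonempty_range_iff.mpr (by omega))
          (fun i => L * ‖y i - p (y i)‖)) (L * ‖x N - p (x N)‖) ∧
    min ((Finset.range N).inf' (Finset.nonempty_range_iff.mpr (by omega))
          (fun i => L * ‖y i - p (y i)‖)) (L * ‖x N - p (x N)‖)
      ≤ L * R / Real.sqrt (∑ k ∈ Finset.range N, (T k - t k ^ 2) + T (N - 1)) := by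
  have hTsucc (i : ℕ) : T (i + 1) = T i + t (i + 1) := by
    rw [hT, hT, Finset.sum_range_succ _ (i + 1)]
  have hTpos (i : ℕ) : 0 < T i := (pow_pos (htpos i) 2).trans_le (htT i)
  constructor
  · refine le_min (Finset.le_inf' _ _ fun i hi => ?_)
      (Finset.inf'_le (fun i => L * ‖x i - p (x i)‖) (Finset.self_mem_range_succ N))
    have hmem : i + 1 ∈ Finset.range (N + 1) := by
      simpa using hi
    refine (Finset.inf'_le (fun i => L * ‖x i - p (x i)‖) hmem).trans ?_
    have h := prox_grad_nonexpansive hL hf hgrad hLip hφ hp (y i) (x (i + 1))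
    rw [← hx i] at h ⊢
    exact mul_le_mul_of_nonneg_left h hL.le
  · have hpot := gfpgm_potential (xs := xs) hL hf hgrad hLip hφ hp ht0 htpos hT htT hy0 hx hy N
    set m := min ((Finset.range N).inf' (Finset.nonempty_range_iff.mpr (by omega))
          (fun i => L * ‖y i - p (y i)‖)) (L * ‖x N - p (x N)‖) with hm
    have hm0 : 0 ≤ m := le_min (Finset.le_inf' _ _ fun i _ => by positivity) (by positivity)
    have hmy (k : ℕ) (hk : k ∈ Finset.range N) : m ^ 2 ≤ L ^ 2 * ‖y k - x (k + 1)‖ ^ 2 := by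
      rw [← mul_pow, hx k]
      exact pow_le_pow_left₀ hm0 ((min_le_left _ _).trans
        (Finset.inf'_le (fun i => L * ‖y i - p (y i)‖) hk)) 2
    have hmx : m ^ 2 ≤ L ^ 2 * ‖x N - p (x N)‖ ^ 2 := by
      rw [← mul_pow]
      exact pow_le_pow_left₀ hm0 (min_le_right _ _) 2
    have hTN : T N - t N = T (N - 1) := by
      obtain ⟨n, rfl⟩ := Nat.exists_eq_add_of_le' hN
      rw [hTsucc]; simp
    -- A proximal gradient step from `x N` decreases `F` by at least `L / 2 * ‖x N - p (x N)‖ ^ 2`,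
    -- and cannot go below the minimum `F xs`.
    have hgap : L / 2 * ‖x N - p (x N)‖ ^ 2 ≤ f (x N) + φ (x N) - (f xs + φ xs) := by
      have h1 := prox_grad_inequality hf hgrad hLip hφ hp (x N) (x N)
      have h2 := isMinOn_iff.1 hxs (p (x N)) (Set.mem_univ _)
      simp only [sub_self, inner_zero_left] at h1
      linarith
    have hsum : (∑ k ∈ Finset.range N, (T k - t k ^ 2)) * m ^ 2
        ≤ L ^ 2 * ∑ k ∈ Finset.range N, (T k - t k ^ 2) * ‖y k - x (k + 1)‖ ^ 2 := by
      rw [Finset.sum_mul, Finset.mul_sum]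
      refine Finset.sum_le_sum fun k hk => ?_
      have := mul_le_mul_of_nonneg_left (hmy k hk) (sub_nonneg.2 (htT k))
      linarith
    have hR2 : ‖x 0 - xs‖ ^ 2 ≤ R ^ 2 := pow_le_pow_left₀ (norm_nonneg _) hR 2
    have hS0 : 0 ≤ ∑ k ∈ Finset.range N, (T k - t k ^ 2) :=
      Finset.sum_nonneg fun k _ => sub_nonneg.2 (htT k)
    have hSpos : 0 < ∑ k ∈ Finset.range N, (T k - t k ^ 2) + T (N - 1) :=
      add_pos_of_nonneg_of_pos hS0 (hTpos _)
    rw [hTN] at hpot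
    have hR' : ∑ k ∈ Finset.range N, (T k - t k ^ 2) * ‖y k - x (k + 1)‖ ^ 2
        + T (N - 1) * ‖x N - p (x N)‖ ^ 2 ≤ R ^ 2 := by
      have h1 := mul_le_mul_of_nonneg_left hgap (hTpos (N - 1)).le
      have h2 := mul_le_mul_of_nonneg_left hR2 (half_pos hL).le
      refine le_of_mul_le_mul_left ?_ (half_pos hL)
      linarith
    rw [le_div_iff₀ (Real.sqrt_pos.2 hSpos)]
    refine le_of_sq_le_sq ?_ (by positivity)
    rw [mul_pow, Real.sq_sqrt hSpos.le, mul_pow]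
    have h1 := mul_le_mul_of_nonneg_left hmx (hTpos (N - 1)).le
    have h2 := mul_le_mul_of_nonneg_left hR' (sq_nonneg L)
    linarith
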